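/- Upper enhancement via connecting paths, case p < p' (Proposition 3.2, item 1). Let (V, E, ends, α) be a finite graph with boundary condition, p ∈ (0,1), q > 0, and suppose p < p'. Let Ẽ ⊆ E be such that for every e ∈ Ẽ, the collection Γ_{E∖Ẽ}(e) is nonempty (there is a path included in E∖Ẽ connecting the two endpoints of e). For e ∈ Ẽ set ε̃_e := (p'−p) · P_{min(p,p')}({ω : ∃ γ ∈ Γ_{E∖Ẽ}(e) with every edge of γ open in ω}), and set ε̃_e := 0 for e ∉ Ẽ. Then φ^α_{G,p,q} ≼ P_{(p'−ε̃_e)_{e∈E}}. -/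

import Mathlib

open scoped Classical

noncomputable section

namespace FKPaper

variable {V E : Type*}

/-- One-step adjacency between wired vertices through an edge in `F`. -/
def Step (ends : E → Sym2 V) (α : Setoid V) (F : Set E) (x y : Quotient α) : Prop :=
  ∃ e ∈ F, Sym2.map (Quotient.mk α) (ends e) = s(x, y)

/-- Setoid of connected components of the wired multigraph with edge set `F`. -/
def connSetoid (ends : E → Sym2 V) (α : Setoid V) (F : Set E) : Setoid (Quotient α) :=
  Relation.EqvGen.setoid (Step ends α F)

/-- Connectivity in the wired multigraph with edge set `F`. -/
def Conn (ends : E → Sym2 V) (α : Setoid V) (F : Set E) (x y : Quotient α) : Prop :=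
  (connSetoid ends α F).r x y

/-- The two endpoints of `e` are joined in the wired multigraph with edge set `F`. -/
def EndsConn (ends : E → Sym2 V) (α : Setoid V) (F : Set E) (e : E) : Prop :=
  ∀ x y : V, ends e = s(x, y) → Conn ends α F (Quotient.mk α x) (Quotient.mk α y)

/-- Number of connected components `k(ω, α)`. -/
def numComponents (ends : E → Sym2 V) (α : Setoid V) (ω : E → Bool) : ℕ :=
  Nat.card (Quotient (connSetoid ends α {e | ω e = true}))

/-- `p' = p / (p + q (1 - p))`. -/
def pPrime (p q : ℝ) : ℝ := p / (p + q * (1 - p))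

/-- Total mass of a set under a weight function. -/
def massOf {ι : Type*} [Fintype ι] (w : ι → ℝ) (A : Set ι) : ℝ :=
  ∑ x ∈ Finset.univ.filter (· ∈ A), w x

/-- Normalized probability of a set under a weight function. -/
def probOf {ι : Type*} [Fintype ι] (w : ι → ℝ) (A : Set ι) : ℝ :=
  massOf w A / massOf w Set.univ

/-- FK weight of a configuration. -/
def fkWeight [Fintype E] (ends : E → Sym2 V) (α : Setoid V) (p q : ℝ) (ω : E → Bool) : ℝ :=
  p ^ (Finset.univ.filter fun e => ω e = true).card *
    (1 - p) ^ (Finset.univ.filter fun e => ω e = false).card *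
    q ^ numComponents ends α ω

/-- The FK (random cluster) probability measure `φ^α_{G,p,q}`. -/
def fkProb [Fintype E] (ends : E → Sym2 V) (α : Setoid V) (p q : ℝ)
    (A : Set (E → Bool)) : ℝ :=
  probOf (fkWeight ends α p q) A

/-- Inhomogeneous Bernoulli weight. -/
def berWeight [Fintype E] (pe : E → ℝ) (ω : E → Bool) : ℝ :=
  ∏ e, if ω e = true then pe e else 1 - pe e

/-- Inhomogeneous Bernoulli product measure `P_{(p_e)}`. -/
def berProb [Fintype E] (pe : E → ℝ) (A : Set (E → Bool)) : ℝ :=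
  probOf (berWeight pe) A

/-- Increasing sets of configurations. -/
def Increasing (A : Set (E → Bool)) : Prop :=
  ∀ ⦃ω ω' : E → Bool⦄, ω ∈ A → (∀ e, ω e ≤ ω' e) → ω' ∈ A

/-- Stochastic domination `μ ≼ ν`. -/
def StochDom [Fintype E] (μ ν : Set (E → Bool) → ℝ) : Prop :=
  ∀ A : Set (E → Bool), Increasing A → μ A ≤ ν A

/-- `Q_F(e)`: cutsets for `e` included in `F`. -/
def Cutsets (ends : E → Sym2 V) (α : Setoid V) (F : Set E) (e : E) : Set (Set E) :=
  {χ | χ ⊆ F ∧ ¬ EndsConn ends α {e' | e' ∉ χ ∧ e' ≠ e} e}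

/-!
Reveal the edges one at a time. If every edge `e`, conditionally on the part of the configuration
already revealed, is open with probability at most `r e`, then the configuration is dominated by
independent edges with parameters `r`. Under the FK measure with `q ≤ 1`, an edge whose endpoints
are joined by the other open edges is open with conditional probability `p`, and any edge is open
with conditional probability between `p` and `p'`. Hence, as long as the edges of `F` are still
unrevealed, they dominate independent edges of parameter `p`, so they join the endpoints of `e`
with conditional probability at least `P_p(F joins the endpoints of e)`, and `e` is open with
conditional probability at most `p' - (p' - p) P_p(F joins the endpoints of e)`. It remains to
reveal `Ẽ` before `E ∖ Ẽ`.
-/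

open Function (update)

/-! ### Connected components after adding an edge -/

section Connectivity

lemma card_quotient_antitone {X : Type*} [Finite X] {s t : Setoid X} (h : s ≤ t) :
    Nat.card (Quotient t) ≤ Nat.card (Quotient s) :=
  Nat.card_le_card_of_surjective (Setoid.map_of_le h)
    (Quotient.map_surjective h Function.surjective_id)

lemma card_quotient_le_succ {X : Type*} [Finite X] {s t : Setoid X} (v : X)
    (h : ∀ a b, t a b → s a b ∨ s a v ∨ s b v) :
    Nat.card (Quotient s) ≤ Nat.card (Quotient t) + 1 := by
  rw [← Finite.card_option]
  let f : Quotient s → Option (Quotient t) := fun c =>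
    if c = Quotient.mk s v then none else some (Quotient.mk t c.out)
  refine Nat.card_le_card_of_injective f fun c d hcd => ?_
  by_cases hc : c = Quotient.mk s v <;> by_cases hd : d = Quotient.mk s v
  · exact hc.trans hd.symm
  · simp [f, hc, hd] at hcd
  · simp [f, hc, hd] at hcd
  · simp only [f, hc, hd, if_false, Option.some_inj] at hcd
    rcases h _ _ (Quotient.exact hcd) with hs | hs | hs
    · exact Quotient.out_equiv_out.1 hs
    · exact absurd (c.out_eq.symm.trans (Quotient.sound hs)) hc
    · exact absurd (d.out_eq.symm.trans (Quotient.sound hs)) hd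

variable {ends : E → Sym2 V} {α : Setoid V} {F F' : Set E} {e : E}

lemma connSetoid_mono (h : F ⊆ F') : connSetoid ends α F ≤ connSetoid ends α F' :=
  Setoid.eqvGen_mono fun _ _ ⟨e, he, hxy⟩ => ⟨e, h he, hxy⟩

lemma EndsConn.mono (h : F ⊆ F') (hF : EndsConn ends α F e) : EndsConn ends α F' e :=
  fun x y hxy => connSetoid_mono h (hF x y hxy)

/-- The equivalence relation obtained from `s` by merging the classes of `u` and `v`. -/
def mergeClasses {X : Type*} (s : Setoid X) (u v : X) : Setoid X where
  r a b := s a b ∨ (s a u ∨ s a v) ∧ (s b u ∨ s b v)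
  iseqv.refl a := .inl (s.refl a)
  iseqv.symm h := h.imp s.symm And.symm
  iseqv.trans {a b c} := by
    have trans_left {x y z} (hxy : s x y) : s y z → s x z := s.trans hxy
    rintro (hab | ⟨ha, hb⟩) (hbc | ⟨hb', hc⟩)
    · exact .inl (s.trans hab hbc)
    · exact .inr ⟨hb'.imp (trans_left hab) (trans_left hab), hc⟩
    · exact .inr ⟨ha, hb.imp (trans_left (s.symm hbc)) (trans_left (s.symm hbc))⟩
    · exact .inr ⟨ha, hc⟩

lemma connSetoid_insert_le {x y : V} (hxy : ends e = s(x, y)) :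
    connSetoid ends α (insert e F) ≤
      mergeClasses (connSetoid ends α F) (Quotient.mk α x) (Quotient.mk α y) := by
  refine Setoid.eqvGen_le ?_
  rintro a b ⟨e', rfl | he', hab⟩
  · rw [hxy, Sym2.map_mk, Sym2.eq_iff] at hab
    rcases hab with ⟨rfl, rfl⟩ | ⟨rfl, rfl⟩
    · exact .inr ⟨.inl (.refl _), .inr (.refl _)⟩
    · exact .inr ⟨.inr (.refl _), .inl (.refl _)⟩
  · exact .inl (.rel _ _ ⟨e', he', hab⟩)

lemma connSetoid_insert_of_endsConn (h : EndsConn ends α F e) :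
    connSetoid ends α (insert e F) = connSetoid ends α F := by
  refine le_antisymm (fun a b hab => ?_) (connSetoid_mono (Set.subset_insert e F))
  obtain ⟨⟨x, y⟩, hxy⟩ := Quot.exists_rep (ends e)
  set s := connSetoid ends α F
  have hyx : s (Quotient.mk α y) (Quotient.mk α x) := s.symm (h x y hxy.symm)
  have joined_left {c} : s c (Quotient.mk α x) ∨ s c (Quotient.mk α y) → s c (Quotient.mk α x) :=
    fun hc => hc.elim id (s.trans · hyx)
  rcases connSetoid_insert_le hxy.symm hab with hs | ⟨ha, hb⟩
  · exact hs
  · exact s.trans (joined_left ha) (s.symm (joined_left hb))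

lemma card_components_le_insert_succ [Finite V] :
    Nat.card (Quotient (connSetoid ends α F)) ≤
      Nat.card (Quotient (connSetoid ends α (insert e F))) + 1 := by
  obtain ⟨⟨x, y⟩, hxy⟩ := Quot.exists_rep (ends e)
  refine card_quotient_le_succ (Quotient.mk α y) fun a b hab => ?_
  rcases connSetoid_insert_le hxy.symm hab with hs | ⟨ha | ha, hb | hb⟩
  · exact .inl hs
  · exact .inl ((connSetoid ends α F).trans ha ((connSetoid ends α F).symm hb))
  · exact .inr (.inr hb)
  · exact .inr (.inl ha)
  · exact .inr (.inl ha)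

variable (ends α) (ω : E → Bool) (e)

lemma setOf_update_true :
    {e' | update ω e true e' = true} = insert e {e' | update ω e false e' = true} := by
  ext e'
  by_cases h : e' = e <;> simp [h]

lemma numComponents_update_true_le [Finite V] :
    numComponents ends α (update ω e true) ≤ numComponents ends α (update ω e false) := by
  rw [numComponents, setOf_update_true]
  exact card_quotient_antitone (connSetoid_mono (Set.subset_insert _ _))

lemma numComponents_update_false_le [Finite V] :
    numComponents ends α (update ω e false) ≤ numComponents ends α (update ω e true) + 1 := by
  rw [numComponents, numComponents, setOf_update_true]
  exact card_components_le_insert_succ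

variable {ends α ω e} in
lemma numComponents_update_of_endsConn
    (h : EndsConn ends α {e' | update ω e false e' = true} e) :
    numComponents ends α (update ω e true) = numComponents ends α (update ω e false) := by
  rw [numComponents, numComponents, setOf_update_true, connSetoid_insert_of_endsConn h]

end Connectivity

/-! ### Weights on configurations -/

section Weights

/-- The occupation variable of the edge `e`: `1` if `e` is open, `0` if it is closed. -/
def occupation (e : E) (ω : E → Bool) : ℝ := if ω e = true then 1 else 0

lemma dependsOn_update_eq {β : Type*} {f : (E → Bool) → β} {T : Set E} (hf : DependsOn f T)
    {e : E} (he : e ∉ T) (ω : E → Bool) (b : Bool) : f (update ω e b) = f ω :=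
  hf fun _ he' => Function.update_of_ne (ne_of_mem_of_not_mem he' he) _ _

lemma update_le_update_of_le {ω η : E → Bool} (h : ω ≤ η) (e : E) {b c : Bool} (hbc : b ≤ c) :
    update ω e b ≤ update η e c :=
  update_le_update_iff.2 ⟨hbc, fun e' _ => h e'⟩

/-- The discrete derivative of `f` in the direction of the edge `e`. -/
def edgeDeriv (e : E) (f : (E → Bool) → ℝ) (ω : E → Bool) : ℝ :=
  f (update ω e true) - f (update ω e false)

lemma edgeDeriv_nonneg {f : (E → Bool) → ℝ} (hf : Monotone f) (e : E) :
    0 ≤ edgeDeriv e f := fun _ =>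
  sub_nonneg.2 (hf (update_le_update_of_le le_rfl e (Bool.false_le _)))

lemma dependsOn_edgeDeriv {f : (E → Bool) → ℝ} {T : Set E} (hf : DependsOn f T) (e : E) :
    DependsOn (edgeDeriv e f) (T \ {e}) := by
  intro ω η h
  have update_congr (b : Bool) : f (update ω e b) = f (update η e b) := hf fun e' he' => by
    by_cases hee' : e' = e
    · simp [hee']
    · simp [hee', h e' ⟨he', hee'⟩]
  rw [edgeDeriv, edgeDeriv, update_congr, update_congr]

lemma Increasing.monotone_indicator {A : Set (E → Bool)} (hA : Increasing A) :
    Monotone (A.indicator fun _ => (1 : ℝ)) := by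
  intro ω η h
  by_cases hω : ω ∈ A
  · simp [hω, hA hω h]
  · simpa [hω] using Set.indicator_nonneg (fun _ _ => zero_le_one) η

lemma massOf_eq_sum_mul_indicator {ι : Type*} [Fintype ι] (w : ι → ℝ) (A : Set ι) :
    massOf w A = ∑ x, w x * A.indicator (fun _ => 1) x := by
  simp [massOf, Finset.sum_filter, Set.indicator_apply]

variable [Fintype E]

lemma two_mul_sum_eq_sum_update (e : E) (F : (E → Bool) → ℝ) :
    2 * ∑ ω, F ω = ∑ ω, (F (update ω e true) + F (update ω e false)) := by
  have flip_involutive : Function.Involutive fun ω : E → Bool => update ω e (!ω e) :=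
    fun ω => by simp
  have sum_flip : ∑ ω, F (update ω e (!ω e)) = ∑ ω, F ω :=
    Equiv.sum_comp (flip_involutive.toPerm _) F
  rw [two_mul]
  nth_rewrite 2 [← sum_flip]
  rw [← Finset.sum_add_distrib]
  refine Finset.sum_congr rfl fun ω _ => ?_
  have update_self : update ω e (ω e) = ω := Function.update_eq_self e ω
  cases hω : ω e <;> rw [hω] at update_self <;> simp [update_self, add_comm]

lemma two_mul_sum_mul_occupation_sub {e : E} {t D : (E → Bool) → ℝ} (ht : DependsOn t {e}ᶜ)
    (hD : DependsOn D {e}ᶜ) (w : (E → Bool) → ℝ) :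
    2 * ∑ ω, w ω * D ω * (occupation e ω - t ω) =
      ∑ ω, ((1 - t ω) * w (update ω e true) - t ω * w (update ω e false)) * D ω := by
  rw [two_mul_sum_eq_sum_update e]
  refine Finset.sum_congr rfl fun ω _ => ?_
  simp only [dependsOn_update_eq ht (Set.notMem_compl_iff.2 rfl),
    dependsOn_update_eq hD (Set.notMem_compl_iff.2 rfl), occupation, Function.update_self]
  simp only [if_true, Bool.false_eq_true, if_false]
  ring

lemma sum_mul_occupation_le {e : E} {w t D : (E → Bool) → ℝ} (ht : DependsOn t {e}ᶜ)
    (hD : DependsOn D {e}ᶜ) (hD0 : 0 ≤ D)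
    (hw : ∀ ω, (1 - t ω) * w (update ω e true) ≤ t ω * w (update ω e false)) :
    ∑ ω, w ω * D ω * occupation e ω ≤ ∑ ω, w ω * D ω * t ω := by
  have h := two_mul_sum_mul_occupation_sub ht hD w
  have hnonpos : ∑ ω, ((1 - t ω) * w (update ω e true) - t ω * w (update ω e false)) * D ω ≤ 0 :=
    Finset.sum_nonpos fun ω _ => mul_nonpos_of_nonpos_of_nonneg (sub_nonpos.2 (hw ω)) (hD0 ω)
  simp only [mul_sub, Finset.sum_sub_distrib] at h
  linarith

variable (r : E → ℝ)

lemma berWeight_update (ω : E → Bool) (e : E) :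
    (1 - r e) * berWeight r (update ω e true) = r e * berWeight r (update ω e false) := by
  have split_at (b : Bool) : berWeight r (update ω e b) = (if b = true then r e else 1 - r e) *
      ∏ x ∈ Finset.univ.erase e, if ω x = true then r x else 1 - r x := by
    rw [berWeight, ← Finset.mul_prod_erase _ _ (Finset.mem_univ e), Function.update_self]
    congr 1
    refine Finset.prod_congr rfl fun x hx => ?_
    rw [Function.update_of_ne (Finset.ne_of_mem_erase hx)]
  rw [split_at, split_at]
  simp only [if_true, Bool.false_eq_true, if_false]
  ring

lemma sum_berWeight : ∑ ω, berWeight r ω = 1 := by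
  simp_rw [berWeight, ← Fintype.piFinset_univ,
    ← Finset.prod_univ_sum (fun _ => Finset.univ) fun e b => if b = true then r e else 1 - r e]
  simp

lemma berProb_eq_sum (A : Set (E → Bool)) :
    berProb r A = ∑ ω, berWeight r ω * A.indicator (fun _ => 1) ω := by
  rw [berProb, probOf, massOf_eq_sum_mul_indicator, massOf_eq_sum_mul_indicator]
  simp [sum_berWeight]

variable {r}

lemma berWeight_nonneg (hr : ∀ e, r e ∈ Set.Icc 0 1) (ω : E → Bool) : 0 ≤ berWeight r ω :=
  Finset.prod_nonneg fun e _ => by split_ifs <;> linarith [(hr e).1, (hr e).2]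

lemma berWeight_pos (hr : ∀ e, r e ∈ Set.Ioo 0 1) (ω : E → Bool) : 0 < berWeight r ω :=
  Finset.prod_pos fun e _ => by split_ifs <;> linarith [(hr e).1, (hr e).2]

lemma berProb_mem_Icc (hr : ∀ e, r e ∈ Set.Icc 0 1) (A : Set (E → Bool)) :
    berProb r A ∈ Set.Icc 0 1 := by
  rw [berProb_eq_sum]
  constructor
  · exact Finset.sum_nonneg fun ω _ => mul_nonneg (berWeight_nonneg hr ω)
      (Set.indicator_nonneg (fun _ _ => zero_le_one) ω)
  · refine (Finset.sum_le_sum fun ω _ => ?_).trans_eq (sum_berWeight r)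
    exact mul_le_of_le_one_right (berWeight_nonneg hr ω)
      (Set.indicator_le_self' (fun _ _ => zero_le_one) ω)

end Weights

/-! ### Resampling and stochastic domination -/

section Resampling

variable [Fintype E]

/-- The mean of `f` at `ω` after the edges of `S` are resampled independently, the edge `e` being
open with probability `r e`. -/
def resample (r : E → ℝ) (S : Finset E) (f : (E → Bool) → ℝ) (ω : E → Bool) : ℝ :=
  ∑ η, berWeight r η * f (S.piecewise η ω)

variable (r : E → ℝ) (S : Finset E) (f : (E → Bool) → ℝ)

lemma resample_empty : resample r ∅ f = f := by
  ext ω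
  simp [resample, ← Finset.sum_mul, sum_berWeight]

variable {f S} in
lemma resample_of_dependsOn (hf : DependsOn f S) (ω : E → Bool) :
    resample r S f ω = ∑ η, berWeight r η * f η :=
  Finset.sum_congr rfl fun η _ => by
    rw [hf fun _ he => S.piecewise_eq_of_mem _ _ he]

lemma dependsOn_resample : DependsOn (resample r S f) (↑S)ᶜ := fun ω η h => by
  simp_rw [resample, S.piecewise_congr (fun _ _ => rfl) h]

variable {r f} in
lemma monotone_resample (hr : ∀ e, r e ∈ Set.Icc 0 1) (hf : Monotone f) :
    Monotone (resample r S f) := fun _ _ h =>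
  Finset.sum_le_sum fun η _ => mul_le_mul_of_nonneg_left
    (hf (S.piecewise_le_piecewise le_rfl h)) (berWeight_nonneg hr η)

variable {S} in
lemma resample_insert {e : E} (he : e ∉ S) (ω : E → Bool) :
    resample r (insert e S) f ω =
      r e * resample r S f (update ω e true) + (1 - r e) * resample r S f (update ω e false) := by
  let g (b : Bool) (η : E → Bool) : ℝ := f (S.piecewise η (update ω e b))
  have hg (b : Bool) : DependsOn (g b) {e}ᶜ := fun η η' h => congrArg f <|
    S.piecewise_congr (fun e' he' => h e' (ne_of_mem_of_not_mem he' he)) fun _ _ => rfl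
  have hsum := two_mul_sum_mul_occupation_sub (e := e) (t := fun _ => r e) (fun _ _ _ => rfl)
    (D := g true - g false) (fun η η' h => by simp only [Pi.sub_apply, hg _ h]) (berWeight r)
  simp only [berWeight_update, sub_self, zero_mul, Finset.sum_const_zero] at hsum
  have hinsert (η : E → Bool) : f ((insert e S).piecewise η ω) =
      g false η + (g true - g false) η * occupation e η := by
    rw [S.piecewise_insert, S.update_piecewise_of_notMem _ _ he, occupation]
    cases η e <;> simp [g]
  have hexpand : ∑ η, berWeight r η * (g true - g false) η * (occupation e η - r e) =
      resample r (insert e S) f ω -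
        (r e * ∑ η, berWeight r η * g true η + (1 - r e) * ∑ η, berWeight r η * g false η) := by
    simp_rw [resample, hinsert, Finset.mul_sum, ← Finset.sum_add_distrib, ← Finset.sum_sub_distrib]
    refine Finset.sum_congr rfl fun η _ => ?_
    rw [Pi.sub_apply]
    ring
  simp only [resample, g] at hexpand ⊢
  linarith

variable {S} in
lemma resample_sub_resample_insert {e : E} (he : e ∉ S) (ω : E → Bool) :
    resample r S f ω - resample r (insert e S) f ω =
      edgeDeriv e (resample r S f) ω * (occupation e ω - r e) := by
  have update_self : update ω e (ω e) = ω := Function.update_eq_self e ω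
  rw [resample_insert r f he, edgeDeriv, occupation]
  cases hω : ω e <;> rw [hω] at update_self <;> simp only [update_self] <;> simp <;> ring

variable {r S f} {ι : Type*} [LinearOrder ι]

lemma sum_mul_le_sum_mul_resample (rank : E → ι) {w : (E → Bool) → ℝ}
    (hr : ∀ e, r e ∈ Set.Icc 0 1) (hS : ∀ e ∈ S, ∀ e', rank e < rank e' → e' ∈ S)
    (hw : ∀ e ∈ S, ∀ D : (E → Bool) → ℝ, 0 ≤ D →
      DependsOn D {e' | e' ≠ e ∧ rank e' ≤ rank e} →
        ∑ ω, w ω * D ω * occupation e ω ≤ r e * ∑ ω, w ω * D ω)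
    (hf : Monotone f) :
    ∑ ω, w ω * f ω ≤ ∑ ω, w ω * resample r S f ω := by
  induction S using Finset.induction_on_min_value rank with
  | empty => rw [resample_empty]
  | insert e S he hmin ih =>
    have later_mem {e'} (h : rank e < rank e') : e' ∈ S :=
      (Finset.mem_insert.1 (hS e (Finset.mem_insert_self e S) e' h)).resolve_left
        (by rintro rfl; exact h.false)
    refine (ih (fun a ha e' h => later_mem ((hmin a ha).trans_lt h))
      fun a ha => hw a (Finset.mem_insert_of_mem ha)).trans ?_
    have hD := hw e (Finset.mem_insert_self e S) _
      (edgeDeriv_nonneg (monotone_resample S hr hf) e)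
      ((dependsOn_edgeDeriv (dependsOn_resample r S f) e).mono
        fun e' he' => ⟨he'.2, not_lt.1 fun h => he'.1 (later_mem h)⟩)
    rw [← sub_nonpos, ← Finset.sum_sub_distrib]
    simp_rw [← mul_sub, resample_sub_resample_insert r f he, ← mul_assoc, mul_sub,
      Finset.sum_sub_distrib, ← Finset.sum_mul]
    linarith

theorem stochDom_probOf_berProb (rank : E → ι) {w : (E → Bool) → ℝ} (hw0 : ∀ ω, 0 < w ω)
    (hr : ∀ e, r e ∈ Set.Icc 0 1)
    (hw : ∀ e, ∀ D : (E → Bool) → ℝ, 0 ≤ D →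
      DependsOn D {e' | e' ≠ e ∧ rank e' ≤ rank e} →
        ∑ ω, w ω * D ω * occupation e ω ≤ r e * ∑ ω, w ω * D ω) :
    StochDom (probOf w) (berProb r) := by
  intro A hA
  have hmass : 0 < massOf w Set.univ :=
    Finset.sum_pos (fun ω _ => hw0 ω) ⟨fun _ => true, by simp⟩
  have hle := sum_mul_le_sum_mul_resample (S := Finset.univ) rank hr
    (fun _ _ e' _ => Finset.mem_univ e') (fun e _ => hw e) hA.monotone_indicator
  have hconst : resample r Finset.univ (A.indicator fun _ => 1) = fun _ => berProb r A :=
    funext fun ω => (resample_of_dependsOn r (by simpa using dependsOn_univ _) ω).trans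
      (berProb_eq_sum r A).symm
  rw [probOf, div_le_iff₀ hmass, massOf_eq_sum_mul_indicator, massOf_eq_sum_mul_indicator]
  simpa [hconst, Finset.mul_sum, mul_comm] using hle

lemma berProb_mul_sum_le {w : (E → Bool) → ℝ} (hr : ∀ e, r e ∈ Set.Icc 0 1)
    (hw : ∀ e ∈ S, ∀ ω, r e * w (update ω e false) ≤ (1 - r e) * w (update ω e true))
    {D : (E → Bool) → ℝ} (hD0 : 0 ≤ D) (hD : DependsOn D (↑S)ᶜ) {A : Set (E → Bool)}
    (hA : Increasing A) (hAS : DependsOn (A.indicator fun _ => (1 : ℝ)) S) :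
    berProb r A * ∑ ω, w ω * D ω ≤ ∑ ω, w ω * D ω * A.indicator (fun _ => 1) ω := by
  have hconst (ω : E → Bool) : resample r S (A.indicator fun _ => 1) ω = berProb r A :=
    (resample_of_dependsOn r hAS ω).trans (berProb_eq_sum r A).symm
  -- The comparison for `-w * D` is the reverse comparison for `w * D`.
  have hle := sum_mul_le_sum_mul_resample (S := S) (w := fun ω => -w ω * D ω) (fun _ => ()) hr
    (fun _ _ _ h => h.false.elim) (fun e he D' hD' hdep => ?_) hA.monotone_indicator
  · simp only [hconst, neg_mul, Finset.sum_neg_distrib, ← Finset.sum_mul] at hle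
    linarith
  · have hdep' : DependsOn (D * D') {e}ᶜ := fun ω η h => congrArg₂ (· * ·)
      (hD fun e' he' => h e' (by rintro rfl; exact he' he)) (hdep fun e' he' => h e' he'.1)
    have hocc := sum_mul_occupation_le (w := -w) (t := fun _ => r e) (fun _ _ _ => rfl) hdep'
      (mul_nonneg hD0 hD') fun ω => by simpa using hw e he ω
    simpa [Finset.mul_sum, mul_assoc, mul_comm, mul_left_comm] using hocc

end Resampling

/-! ### The FK measure for `q ≤ 1` -/

section FK

variable {p q : ℝ}

lemma pPrime_denom_pos (hp : p ∈ Set.Ioo 0 1) (hq : 0 < q) : 0 < p + q * (1 - p) :=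
  add_pos hp.1 (mul_pos hq (sub_pos.2 hp.2))

lemma one_sub_pPrime (hp : p ∈ Set.Ioo 0 1) (hq : 0 < q) :
    1 - pPrime p q = q * (1 - p) / (p + q * (1 - p)) := by
  rw [pPrime, one_sub_div (pPrime_denom_pos hp hq).ne', add_sub_cancel_left]

lemma pPrime_le_one (hp : p ∈ Set.Ioo 0 1) (hq : 0 < q) : pPrime p q ≤ 1 :=
  div_le_one_of_le₀ (le_add_of_nonneg_right (mul_pos hq (sub_pos.2 hp.2)).le)
    (pPrime_denom_pos hp hq).le

lemma le_pPrime_iff (hp : p ∈ Set.Ioo 0 1) (hq : 0 < q) : p ≤ pPrime p q ↔ q ≤ 1 := by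
  rw [pPrime, le_div_iff₀ (pPrime_denom_pos hp hq), mul_le_iff_le_one_right hp.1,
    ← le_sub_iff_add_le', mul_le_iff_le_one_left (sub_pos.2 hp.2)]

variable [Fintype E] (ends : E → Sym2 V) (α : Setoid V)

lemma fkWeight_eq_berWeight_mul (ω : E → Bool) :
    fkWeight ends α p q ω = berWeight (fun _ => p) ω * q ^ numComponents ends α ω := by
  simp [fkWeight, berWeight, Finset.prod_ite]

lemma fkWeight_pos (hp : p ∈ Set.Ioo 0 1) (hq : 0 < q) (ω : E → Bool) :
    0 < fkWeight ends α p q ω := by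
  rw [fkWeight_eq_berWeight_mul]
  exact mul_pos (berWeight_pos (fun _ => hp) ω) (pow_pos hq _)

variable {ends α} in
lemma fkWeight_update_of_endsConn {ω : E → Bool} {e : E}
    (h : EndsConn ends α {e' | update ω e false e' = true} e) :
    (1 - p) * fkWeight ends α p q (update ω e true) =
      p * fkWeight ends α p q (update ω e false) := by
  simp only [fkWeight_eq_berWeight_mul, numComponents_update_of_endsConn h, ← mul_assoc]
  rw [berWeight_update (fun _ => p)]

variable [Finite V] (ω : E → Bool) (e : E)

lemma fkWeight_update_false_le (hp : p ∈ Set.Ioo 0 1) (hq : 0 < q) (hq1 : q ≤ 1) :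
    p * fkWeight ends α p q (update ω e false) ≤
      (1 - p) * fkWeight ends α p q (update ω e true) := by
  simp only [fkWeight_eq_berWeight_mul, ← mul_assoc]
  rw [berWeight_update (fun _ => p)]
  exact mul_le_mul_of_nonneg_left
    (pow_le_pow_of_le_one hq.le hq1 (numComponents_update_true_le ends α e ω))
    (mul_pos hp.1 (berWeight_pos (fun _ => hp) _)).le

lemma fkWeight_update_true_le (hp : p ∈ Set.Ioo 0 1) (hq : 0 < q) (hq1 : q ≤ 1) :
    (1 - pPrime p q) * fkWeight ends α p q (update ω e true) ≤
      pPrime p q * fkWeight ends α p q (update ω e false) := by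
  rw [one_sub_pPrime hp hq, pPrime, div_mul_eq_mul_div, div_mul_eq_mul_div]
  refine div_le_div_of_nonneg_right ?_ (pPrime_denom_pos hp hq).le
  simp only [fkWeight_eq_berWeight_mul]
  set b := berWeight fun _ : E => p
  set k := numComponents ends α
  calc q * (1 - p) * (b (update ω e true) * q ^ k (update ω e true))
      = (1 - p) * b (update ω e true) * q ^ (k (update ω e true) + 1) := by ring
    _ = p * b (update ω e false) * q ^ (k (update ω e true) + 1) := by
      rw [berWeight_update (fun _ => p)]
    _ ≤ p * b (update ω e false) * q ^ k (update ω e false) :=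
      mul_le_mul_of_nonneg_left
        (pow_le_pow_of_le_one hq.le hq1 (numComponents_update_false_le ends α e ω))
        (mul_pos hp.1 (berWeight_pos (fun _ => hp) _)).le
    _ = p * (b (update ω e false) * q ^ k (update ω e false)) := mul_assoc _ _ _

end FK

/-! ### Connections through unrevealed edges -/

section Enhancement

variable (ends : E → Sym2 V) (α : Setoid V) (F : Set E) (e : E)

/-- The event that the endpoints of `e` are joined by open edges of `F`, that is, that some path
of `Γ_F(e)` is open. -/
def connEvent : Set (E → Bool) :=
  {ω | EndsConn ends α (F ∩ {e' | ω e' = true}) e}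

lemma increasing_connEvent : Increasing (connEvent ends α F e) := fun ω _ hω h =>
  EndsConn.mono (Set.inter_subset_inter_right F fun e' (he' : ω e' = true) =>
    Bool.eq_true_of_true_le (he' ▸ h e')) hω

lemma dependsOn_indicator_connEvent :
    DependsOn ((connEvent ends α F e).indicator fun _ => (1 : ℝ)) F := by
  intro ω η h
  have open_inter_eq : F ∩ {e' | ω e' = true} = F ∩ {e' | η e' = true} := by
    ext e'
    exact and_congr_right fun he' => by simp [h e' he']
  simp only [connEvent, Set.indicator_apply, Set.mem_ofPred_eq, open_inter_eq]

variable {F e} in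
lemma endsConn_update_false_of_mem_connEvent (he : e ∉ F) {ω : E → Bool}
    (hω : ω ∈ connEvent ends α F e) : EndsConn ends α {e' | update ω e false e' = true} e := by
  refine EndsConn.mono ?_ hω
  rintro e' ⟨heF, hopen⟩
  simpa [ne_of_mem_of_not_mem heF he] using hopen

variable {F e} [Finite V] [Fintype E] {p q : ℝ}

lemma fkWeight_update_true_le_of_connEvent (hp : p ∈ Set.Ioo 0 1) (hq : 0 < q) (hq1 : q ≤ 1)
    (he : e ∉ F) (ω : E → Bool) {t : ℝ}
    (ht : t = pPrime p q - (pPrime p q - p) * (connEvent ends α F e).indicator (fun _ => 1) ω) :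
    (1 - t) * fkWeight ends α p q (update ω e true) ≤
      t * fkWeight ends α p q (update ω e false) := by
  by_cases hω : ω ∈ connEvent ends α F e
  · obtain rfl : t = p := by simp [ht, hω]
    exact (fkWeight_update_of_endsConn
      (endsConn_update_false_of_mem_connEvent ends α he hω)).le
  · obtain rfl : t = pPrime p q := by simp [ht, hω]
    exact fkWeight_update_true_le ends α ω e hp hq hq1

lemma sum_fkWeight_mul_occupation_le (hp : p ∈ Set.Ioo 0 1) (hq : 0 < q) (hq1 : q ≤ 1)
    (he : e ∉ F) {D : (E → Bool) → ℝ} (hD0 : 0 ≤ D) (hD : DependsOn D (insert e F)ᶜ) :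
    ∑ ω, fkWeight ends α p q ω * D ω * occupation e ω ≤
      (pPrime p q - (pPrime p q - p) * berProb (fun _ => p) (connEvent ends α F e)) *
        ∑ ω, fkWeight ends α p q ω * D ω := by
  set B : (E → Bool) → ℝ := (connEvent ends α F e).indicator fun _ => 1
  have hB : DependsOn B F := dependsOn_indicator_connEvent ends α F e
  have hBe : DependsOn (fun ω => pPrime p q - (pPrime p q - p) * B ω) {e}ᶜ := fun _ _ h => by
    simp only [hB fun e' he' => h e' (ne_of_mem_of_not_mem he' he)]
  have hconn : berProb (fun _ => p) (connEvent ends α F e) * ∑ ω, fkWeight ends α p q ω * D ω ≤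
      ∑ ω, fkWeight ends α p q ω * D ω * B ω :=
    berProb_mul_sum_le (S := F.toFinset) (fun _ => Set.Ioo_subset_Icc_self hp)
      (fun e' _ ω => fkWeight_update_false_le ends α ω e' hp hq hq1) hD0
      (hD.mono (by simp [Set.subset_insert])) (increasing_connEvent ends α F e) (by simpa using hB)
  calc ∑ ω, fkWeight ends α p q ω * D ω * occupation e ω
      ≤ ∑ ω, fkWeight ends α p q ω * D ω * (pPrime p q - (pPrime p q - p) * B ω) :=
        sum_mul_occupation_le hBe (hD.mono (by simp)) hD0 fun ω =>
          fkWeight_update_true_le_of_connEvent ends α hp hq hq1 he ω rfl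
    _ = pPrime p q * ∑ ω, fkWeight ends α p q ω * D ω -
          (pPrime p q - p) * ∑ ω, fkWeight ends α p q ω * D ω * B ω := by
        rw [Finset.mul_sum, Finset.mul_sum, ← Finset.sum_sub_distrib]
        exact Finset.sum_congr rfl fun ω _ => by ring
    _ ≤ _ := by
        linarith [mul_le_mul_of_nonneg_left hconn (sub_nonneg.2 ((le_pPrime_iff hp hq).2 hq1))]

/-- Edges are revealed in the order of `rank`, so that `{e' | rank e < rank e'}` is unrevealed when
the state of `e` is. -/
theorem above_enhancement_of_lt_paths_general {ι : Type*} [LinearOrder ι]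
    (hp : p ∈ Set.Ioo 0 1) (hq : 0 < q) (hpp' : p ≤ pPrime p q) (rank : E → ι) (ε : E → ℝ)
    (hε : ∀ e, ε e ∈ Set.Icc 0 ((pPrime p q - p) *
      berProb (fun _ => p) (connEvent ends α {e' | rank e < rank e'} e))) :
    StochDom (fkProb ends α p q) (berProb fun e => pPrime p q - ε e) := by
  have hq1 : q ≤ 1 := (le_pPrime_iff hp hq).1 hpp'
  have hr (e : E) : pPrime p q - ε e ∈ Set.Icc 0 1 := by
    have hle : ε e ≤ pPrime p q - p := (hε e).2.trans <| mul_le_of_le_one_right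
      (sub_nonneg.2 hpp') (berProb_mem_Icc (fun _ => Set.Ioo_subset_Icc_self hp) _).2
    constructor <;> linarith [hp.1, (hε e).1, pPrime_le_one hp hq]
  refine stochDom_probOf_berProb rank (fkWeight_pos ends α hp hq) hr fun e D hD0 hD => ?_
  refine (sum_fkWeight_mul_occupation_le ends α hp hq hq1 (lt_irrefl (rank e)) hD0
    (hD.mono fun e' he' => ?_)).trans (mul_le_mul_of_nonneg_right (sub_le_sub_left (hε e).2 _) ?_)
  · simpa using he'
  · exact Finset.sum_nonneg fun ω _ => mul_nonneg (fkWeight_pos ends α hp hq ω).le (hD0 ω)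

end Enhancement

/-- **Proposition 3.2, item 1** (upper enhancement via connecting paths, case `p < p'`).
`Γ_{E∖Ẽ}(e)` being nonempty is expressed as: the endpoints of `e` are joined in the wired
multigraph using only edges of `E ∖ Ẽ`; the event that some path of `Γ_{E∖Ẽ}(e)` is open in `ω`
is expressed as: the endpoints of `e` are joined using only edges of `E ∖ Ẽ` that are open. -/
theorem above_enhancement_of_lt_paths
    {V E : Type*} [Fintype V] [Fintype E]
    (ends : E → Sym2 V) (α : Setoid V)
    (p q : ℝ) (hp : p ∈ Set.Ioo (0 : ℝ) 1) (hq : 0 < q)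
    (hpp' : p < pPrime p q)
    (Etilde : Set E)
    (hpath : ∀ e ∈ Etilde, EndsConn ends α Etildeᶜ e)
    (εtilde : E → ℝ)
    (hε : ∀ e, εtilde e =
      if e ∈ Etilde then
        (pPrime p q - p) *
          berProb (fun _ => min p (pPrime p q))
            {ω | EndsConn ends α (Etildeᶜ ∩ {e' | ω e' = true}) e}
      else 0) :
    StochDom (fkProb ends α p q) (berProb fun e => pPrime p q - εtilde e) := by
  refine above_enhancement_of_lt_paths_general ends α hp hq hpp'.le (· ∉ Etilde) εtilde fun e => ?_
  have hnonneg (A : Set (E → Bool)) : 0 ≤ (pPrime p q - p) * berProb (fun _ => p) A :=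
    mul_nonneg (sub_nonneg.2 hpp'.le) (berProb_mem_Icc (fun _ => Set.Ioo_subset_Icc_self hp) A).1
  rw [hε, min_eq_left hpp'.le]
  split_ifs with he
  · have unrevealed_eq : {e' | (e ∉ Etilde) < (e' ∉ Etilde)} = Etildeᶜ := by
      ext e'
      simp [he, lt_iff_le_not_ge]
    rw [unrevealed_eq]
    exact Set.right_mem_Icc.2 (hnonneg _)
  · exact Set.left_mem_Icc.2 (hnonneg _)

end FKPaper
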